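/- arXiv:2306.14625 — 6 statements merged into one kernel-verified Lean document; each statement's English description precedes it below -/
import Mathlib

section
/- Let G be a finite simple connected graph with n ≥ 2 vertices and m edges, and let U_G be its Grover matrix. Then det(U_G) ∈ {−1, 1}, and for every nonzero u ∈ ℂ, u^{2m} · det(I_{2m} − u⁻¹·U_G) = det(U_G) · det(I_{2m} − u·U_G). Equivalently, the zeta function ζ_{U_G}(u) = (det(I_{2m} − u·U_G))⁻¹ satisfies ζ_{U_G}(1/u) = det(U_G) · u^{2m} · ζ_{U_G}(u), i.e., ζ_{U_G} is an absolute automorphic form of weight −2m. -/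
open Matrix SimpleGraph

/-- The Grover matrix of a finite simple graph `G`, indexed by the arcs (darts) of `G`. -/
noncomputable def groverMatrix {V : Type*} [Fintype V] [DecidableEq V]
    (G : SimpleGraph V) [DecidableRel G.Adj] : Matrix G.Dart G.Dart ℝ :=
  fun e f =>
    if f.toProd.2 = e.toProd.1 then
      (if f = e.symm then 2 / (G.degree f.toProd.2) - 1 else 2 / (G.degree f.toProd.2))
    else 0

/-!
The Grover matrix is `U = (2P - 1) S`, where `P` is the orthogonal projection that averages a
function over the arcs with a common origin and `S` is the permutation matrix of arc reversal, so
`U` is a product of two orthogonal matrices. For any orthogonal matrix `W` the functional equation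
is the determinant of `u - W = -W (1 - u Wᵀ)`; for `W = U` the sign coming from the minus
disappears, because the number of arcs is even.
-/

section Orthogonal

variable {n R S : Type*} [Fintype n] [DecidableEq n] [CommRing R] [CommRing S]

theorem det_eq_one_or_neg_one_of_mem_orthogonalGroup [NoZeroDivisors R] {W : Matrix n n R}
    (hW : W ∈ orthogonalGroup n R) : W.det = 1 ∨ W.det = -1 := by
  refine mul_self_eq_one_iff.1 ?_
  calc W.det * W.det = (W * Wᵀ).det := by rw [det_mul, det_transpose]
    _ = 1 := by rw [(mem_orthogonalGroup_iff n R).1 hW, det_one]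

theorem map_mem_orthogonalGroup (f : R →+* S) {W : Matrix n n R}
    (hW : W ∈ orthogonalGroup n R) : W.map f ∈ orthogonalGroup n S := by
  rw [mem_orthogonalGroup_iff, ← transpose_map, ← Matrix.map_mul,
    (mem_orthogonalGroup_iff n R).1 hW, Matrix.map_one f f.map_zero f.map_one]

theorem permMatrix_mem_orthogonalGroup (σ : Equiv.Perm n) :
    σ.permMatrix R ∈ orthogonalGroup n R := by
  rw [mem_orthogonalGroup_iff, transpose_permMatrix, ← permMatrix_mul, inv_mul_cancel,
    permMatrix_one]

theorem two_mul_sub_one_mem_orthogonalGroup {P : Matrix n n R} (hP : IsIdempotentElem P)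
    (hPT : P.IsSymm) : 2 * P - 1 ∈ orthogonalGroup n R :=
  letI := starRingOfComm (R := R)
  IsStarProjection.two_mul_sub_one_mem_unitary ⟨hP, hPT⟩

theorem det_smul_one_sub_of_mem_orthogonalGroup {W : Matrix n n R}
    (hW : W ∈ orthogonalGroup n R) (u : R) :
    (u • (1 : Matrix n n R) - W).det = (-1) ^ Fintype.card n * (W.det * (1 - u • W).det) := by
  have hfactor : u • (1 : Matrix n n R) - W = -(W * (1 - u • Wᵀ)) := by
    rw [mul_sub, mul_one, mul_smul_comm, (mem_orthogonalGroup_iff n R).1 hW, neg_sub]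
  have htranspose : (1 - u • Wᵀ).det = (1 - u • W).det := by
    rw [← det_transpose, transpose_sub, transpose_one, transpose_smul, transpose_transpose]
  rw [hfactor, det_neg, det_mul, htranspose]

theorem pow_card_mul_det_one_sub_smul_of_mem_orthogonalGroup {W : Matrix n n R}
    (hW : W ∈ orthogonalGroup n R) {u v : R} (huv : u * v = 1) :
    u ^ Fintype.card n * (1 - v • W).det =
      (-1) ^ Fintype.card n * (W.det * (1 - u • W).det) := by
  rw [← det_smul, smul_sub, smul_smul, huv, one_smul,
    det_smul_one_sub_of_mem_orthogonalGroup hW]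

end Orthogonal

section Arcs

variable {V : Type*} (G : SimpleGraph V)

/-- The involution `e ↦ e⁻¹` on the arcs of `G`, a permutation so that its matrix can serve as the
flip-flop shift of the Grover walk. -/
def arcReversal : Equiv.Perm G.Dart :=
  (Dart.symm_involutive (G := G)).toPerm

variable [Fintype V] [DecidableEq V] [DecidableRel G.Adj]

theorem sum_dart_ite_fst_eq {M : Type*} [AddCommMonoid M] (v : V) (c : M) :
    (∑ e : G.Dart, if v = e.fst then c else 0) = G.degree v • c := by
  simp_rw [eq_comm (a := v)]
  rw [← Finset.sum_filter, Finset.sum_const, dart_fst_fiber_card_eq_degree]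

/-- The projection of the functions on arcs onto those depending only on the origin of the arc: it
replaces the value at `e` by the average over the arcs with the same origin as `e`.
The reflection `2P - 1` in its range is the coin of the Grover walk. -/
def originProjection (R : Type*) [DivisionRing R] : Matrix G.Dart G.Dart R :=
  of fun e f => if e.fst = f.fst then (G.degree e.fst : R)⁻¹ else 0

variable (R : Type*) [DivisionRing R]

theorem originProjection_apply (e f : G.Dart) :
    originProjection G R e f = if e.fst = f.fst then (G.degree e.fst : R)⁻¹ else 0 :=
  rfl

theorem isSymm_originProjection : (originProjection G R).IsSymm := by
  refine IsSymm.ext fun e f => ?_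
  by_cases h : e.fst = f.fst
  · rw [originProjection_apply, originProjection_apply, h]
  · simp only [originProjection_apply, h, Ne.symm h, if_false]

theorem isIdempotentElem_originProjection [CharZero R] :
    IsIdempotentElem (originProjection G R) := by
  ext e f
  have hdeg : (G.degree e.fst : R) ≠ 0 :=
    Nat.cast_ne_zero.2 (G.degree_pos_iff_exists_adj _ |>.2 ⟨_, e.adj⟩).ne'
  have hterm (g : G.Dart) : originProjection G R e g * originProjection G R g f =
      if e.fst = g.fst then (G.degree e.fst : R)⁻¹ * originProjection G R e f else 0 := by
    by_cases h : e.fst = g.fst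
    · rw [if_pos h, originProjection_apply G R g f, originProjection_apply G R e f, ← h,
        originProjection_apply, if_pos h]
    · simp only [originProjection_apply, h, if_false, zero_mul]
  simp_rw [mul_apply, hterm]
  rw [sum_dart_ite_fst_eq, nsmul_eq_mul, mul_inv_cancel_left₀ hdeg]

theorem groverMatrix_apply_eq_originProjection_sub_one (e f : G.Dart) :
    groverMatrix G e f =
      2 * originProjection G ℝ e f.symm - (1 : Matrix G.Dart G.Dart ℝ) e f.symm := by
  have hreverse : f = e.symm ↔ e = f.symm := by rw [eq_comm, Dart.symm_involutive.eq_iff]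
  rw [originProjection_apply, one_apply, groverMatrix, Dart.symm_toProd, Prod.fst_swap]
  by_cases hadj : f.snd = e.fst
  · have hdeg : G.degree f.snd = G.degree e.fst := by rw [hadj]
    rw [if_pos hadj, if_pos hadj.symm, hdeg, ← div_eq_mul_inv]
    simp only [hreverse, apply_ite, sub_zero]
    split_ifs <;> rfl
  · have hne : e ≠ f.symm := fun h => hadj (by rw [h, Dart.symm_toProd, Prod.fst_swap])
    rw [if_neg hadj, if_neg (Ne.symm hadj), if_neg hne, mul_zero, sub_zero]

theorem groverMatrix_eq_mul_permMatrix :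
    groverMatrix G = (2 * originProjection G ℝ - 1) * (arcReversal G).permMatrix ℝ := by
  rw [PEquiv.mul_toMatrix_toPEquiv, two_mul]
  ext e f
  rw [groverMatrix_apply_eq_originProjection_sub_one, two_mul]
  rfl

theorem groverMatrix_mem_orthogonalGroup : groverMatrix G ∈ orthogonalGroup G.Dart ℝ := by
  rw [groverMatrix_eq_mul_permMatrix]
  exact mul_mem
    (two_mul_sub_one_mem_orthogonalGroup (isIdempotentElem_originProjection G ℝ)
      (isSymm_originProjection G ℝ))
    (permMatrix_mem_orthogonalGroup _)

end Arcs

theorem groverMatrix_absolute_automorphic_general {V : Type*} [Fintype V] [DecidableEq V]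
    (G : SimpleGraph V) [DecidableRel G.Adj] :
    (groverMatrix G).det ∈ ({-1, 1} : Set ℝ) ∧
    ∀ u : ℂ, u ≠ 0 →
      u ^ (2 * G.edgeFinset.card) *
          ((1 : Matrix G.Dart G.Dart ℂ) - u⁻¹ • (groverMatrix G).map Complex.ofReal).det
        = ((groverMatrix G).map Complex.ofReal).det *
            ((1 : Matrix G.Dart G.Dart ℂ) - u • (groverMatrix G).map Complex.ofReal).det := by
  have hU := groverMatrix_mem_orthogonalGroup G
  refine ⟨(det_eq_one_or_neg_one_of_mem_orthogonalGroup hU).symm, fun u hu => ?_⟩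
  have hUℂ : (groverMatrix G).map Complex.ofReal ∈ orthogonalGroup G.Dart ℂ :=
    map_mem_orthogonalGroup Complex.ofRealHom hU
  have hfunctional :=
    pow_card_mul_det_one_sub_smul_of_mem_orthogonalGroup hUℂ (mul_inv_cancel₀ hu)
  rwa [G.dart_card_eq_twice_card_edges, (even_two_mul _).neg_one_pow, one_mul] at hfunctional

/-- For a finite simple connected graph `G` with `n ≥ 2` vertices and `m`
edges, `det U_G ∈ {-1, 1}`, and for every nonzero `u : ℂ`,
`u^(2m) * det(I - u⁻¹ • U_G) = det U_G * det(I - u • U_G)`; i.e. the zeta function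
`ζ_{U_G}(u) = det(I - u • U_G)⁻¹` satisfies `ζ_{U_G}(1/u) = det U_G * u^(2m) * ζ_{U_G}(u)`,
so `ζ_{U_G}` is an absolute automorphic form of weight `-2m`. -/
theorem groverMatrix_absolute_automorphic {V : Type*} [Fintype V] [DecidableEq V]
    (G : SimpleGraph V) [DecidableRel G.Adj] (hG : G.Connected)
    (n m : ℕ) (hn : n = Fintype.card V) (hn2 : 2 ≤ n) (hm : m = G.edgeFinset.card) :
    (groverMatrix G).det ∈ ({-1, 1} : Set ℝ) ∧
    ∀ u : ℂ, u ≠ 0 →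
      u ^ (2 * m) *
          ((1 : Matrix G.Dart G.Dart ℂ) - u⁻¹ • (groverMatrix G).map Complex.ofReal).det
        = ((groverMatrix G).map Complex.ofReal).det *
            ((1 : Matrix G.Dart G.Dart ℂ) - u • (groverMatrix G).map Complex.ofReal).det :=
  hm ▸ groverMatrix_absolute_automorphic_general G
end

section
/- (Konno–Sato theorem) Let G be a finite simple connected graph with n ≥ 2 vertices and m edges, let U_G be its Grover matrix, and let P_G be the transition probability matrix of the simple symmetric random walk on G. Then for every u ∈ ℂ, (1 − u²)^n · det(I_{2m} − u·U_G) = (1 − u²)^m · det((1 + u²)·I_n − 2u·P_G). -/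
open Matrix SimpleGraph

/-- The transition probability matrix of the simple symmetric random walk on `G`:
`P u v = 1 / deg u` if `(u, v)` is an arc of `G`, and `0` otherwise. -/
noncomputable def transitionMatrix {V : Type*} [Fintype V] [DecidableEq V]
    (G : SimpleGraph V) [DecidableRel G.Adj] : Matrix V V ℝ :=
  fun u v => if G.Adj u v then 1 / (G.degree u) else 0

/-!
Let `J` be the permutation matrix of arc reversal. Then `U_G = A B - J`, where `A` records the
origin of each arc and `B` its terminus, weighted by `2 / deg`; these satisfy `B A = 2 P_G` and
`B J A = 2`. So `1 - u U_G = (1 + u J) - u A B` perturbs `1 + u J` by a product through the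
vertices. Since `J ^ 2 = 1`, the matrix `1 - u J` inverts `1 + u J` up to the factor `1 - u ^ 2`,
and the matrix determinant lemma leaves the vertex determinant of
`(1 - u ^ 2) - u B (1 - u J) A = (1 + u ^ 2) - 2 u P_G`. The other factor,
`det (1 + u J) = (1 - u ^ 2) ^ m`, comes from the `m` two-element orbits of the reversal.
Multiplying by `1 - u ^ 2` instead of dividing by it makes `u = ± 1` no exception.
-/

section Determinant

variable {α β R : Type*} [Fintype α] [DecidableEq α] [Fintype β] [DecidableEq β] [CommRing R]

theorem pow_card_mul_det_sub_mul {N N' : Matrix α α R} {c : R} (h : N' * N = c • 1)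
    (A : Matrix α β R) (B : Matrix β α R) :
    c ^ Fintype.card β * (N - A * B).det = N.det * (c • 1 - B * N' * A).det := by
  have hblock : fromBlocks 1 0 (-(B * N')) (c • 1) * fromBlocks N A B 1
      = fromBlocks N A 0 (c • 1 - B * N' * A) := by
    simp [fromBlocks_multiply, Matrix.mul_assoc, h, sub_eq_neg_add]
  have hdet := congr_arg det hblock
  rwa [det_mul, det_fromBlocks_zero₁₂, det_fromBlocks_one₂₂, det_fromBlocks_zero₂₁, det_one,
    one_mul, det_smul, det_one, mul_one] at hdet

theorem pow_card_mul_det_one_sub_smul_mul_sub {J : Matrix α α R} {A : Matrix α β R}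
    {B : Matrix β α R} (hJ : J * J = 1) (hBJA : B * J * A = (2 : R) • 1) (u : R) :
    (1 - u ^ 2) ^ Fintype.card β * (1 - u • (A * B - J)).det
      = (1 + u • J).det * ((1 + u ^ 2) • 1 - u • (B * A)).det := by
  have hinv : (1 - u • J) * (1 + u • J) = (1 - u ^ 2) • 1 := by
    simp only [sub_mul, mul_add, one_mul, mul_one, smul_mul_smul_comm, hJ, sub_smul, one_smul,
      pow_two]
    abel
  have hleft : 1 - u • (A * B - J) = 1 + u • J - (u • A) * B := by
    rw [Matrix.smul_mul, smul_sub]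
    abel
  have hright : (1 - u ^ 2) • 1 - B * (1 - u • J) * (u • A)
      = (1 + u ^ 2) • 1 - u • (B * A) := by
    simp only [Matrix.mul_smul, Matrix.mul_sub, Matrix.sub_mul, Matrix.smul_mul, Matrix.mul_one,
      hBJA]
    module
  rw [hleft, pow_card_mul_det_sub_mul hinv, hright]

end Determinant

section Involution

variable {α : Type*} {σ : Equiv.Perm α}

theorem exists_sum_equiv_of_involutive (hσ : Function.Involutive σ) (hfix : ∀ a, σ a ≠ a) :
    ∃ (s : Set α) (e : s ⊕ s ≃ α),
      (∀ a, σ (e (.inl a)) = e (.inr a)) ∧ ∀ a, σ (e (.inr a)) = e (.inl a) := by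
  classical
  let s : Set α := {a | WellOrderingRel a (σ a)}
  have hs (a : α) : a ∈ s ↔ σ a ∉ s := by
    simp only [s, Set.mem_ofPred_eq, hσ a]
    refine ⟨fun h h' => asymm h h', fun h => ?_⟩
    rcases trichotomous_of WellOrderingRel a (σ a) with h' | h' | h'
    exacts [h', absurd h'.symm (hfix a), absurd h' h]
  let e : s ⊕ s ≃ α :=
    ((Equiv.refl s).sumCongr (σ.subtypeEquiv hs)).trans (Equiv.sumCompl (· ∈ s))
  exact ⟨s, e, fun a => rfl, fun a => hσ a⟩

variable [Fintype α] [DecidableEq α] {R : Type*} [CommRing R]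

theorem det_one_add_smul_permMatrix_of_involutive (hσ : Function.Involutive σ)
    (hfix : ∀ a, σ a ≠ a) (u : R) :
    (1 + u • σ.permMatrix R).det = (1 - u ^ 2) ^ (Fintype.card α / 2) := by
  classical
  obtain ⟨s, e, hinl, hinr⟩ := exists_sum_equiv_of_involutive hσ hfix
  have hcard : Fintype.card α / 2 = Fintype.card s := by
    rw [← Fintype.card_congr e, Fintype.card_sum]
    omega
  have hblock : (1 + u • σ.permMatrix R).submatrix e e = fromBlocks 1 (u • 1) (u • 1) 1 := by
    ext (a | a) (b | b) <;>
      simp [Matrix.one_apply, PEquiv.toMatrix_apply, hinl, hinr, eq_comm]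
  have hschur : (1 : Matrix s s R) - (u • 1) * (u • 1) = (1 - u ^ 2) • 1 := by
    simp [sub_smul, smul_smul, pow_two]
  rw [← det_submatrix_equiv_self e, hblock, det_fromBlocks_one₁₁, hschur, det_smul, det_one,
    mul_one, hcard]

end Involution

section DartMatrices

variable {V : Type*} (G : SimpleGraph V)

/-- Arc reversal `e ↦ e⁻¹`, as a permutation of the arcs; its permutation matrix is `J` above. -/
def dartReversal : Equiv.Perm G.Dart :=
  Dart.symm_involutive.toPerm

variable [DecidableEq V]

theorem permMatrix_dartReversal_apply {R : Type*} [Zero R] [One R] (e f : G.Dart) :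
    (dartReversal G).permMatrix R e f = if f = e.symm then 1 else 0 := by
  simp [PEquiv.toMatrix_apply, dartReversal, eq_comm]

/-- The vertex-by-arc incidence matrix whose row `v` marks the arcs leaving `v`. -/
def outIncMatrix (R : Type*) [Zero R] [One R] : Matrix V G.Dart R :=
  of fun v d => if d.fst = v then 1 else 0

/-- The vertex-by-arc incidence matrix whose row `v` marks the arcs entering `v`. -/
def inIncMatrix (R : Type*) [Zero R] [One R] : Matrix V G.Dart R :=
  of fun v d => if d.snd = v then 1 else 0

variable [Fintype V]

theorem transpose_outIncMatrix_mul_apply {R β : Type*} [NonAssocSemiring R] (M : Matrix V β R)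
    (d : G.Dart) (b : β) : ((outIncMatrix G R)ᵀ * M) d b = M d.fst b := by
  simp [outIncMatrix, mul_apply]

variable [DecidableRel G.Adj]

theorem permMatrix_dartReversal_mul_self (R : Type*) [NonAssocSemiring R] :
    (dartReversal G).permMatrix R * (dartReversal G).permMatrix R = 1 := by
  have hsq : dartReversal G * dartReversal G = 1 := Equiv.ext Dart.symm_symm
  rw [← permMatrix_mul, hsq, permMatrix_one]

theorem det_one_add_smul_permMatrix_dartReversal {R : Type*} [CommRing R] (u : R) :
    (1 + u • (dartReversal G).permMatrix R).det = (1 - u ^ 2) ^ G.edgeFinset.card := by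
  rw [det_one_add_smul_permMatrix_of_involutive Dart.symm_involutive Dart.symm_ne,
    G.dart_card_eq_twice_card_edges, Nat.mul_div_cancel_left _ two_pos]

theorem inIncMatrix_mul_permMatrix_dartReversal (R : Type*) [NonAssocSemiring R] :
    inIncMatrix G R * (dartReversal G).permMatrix R = outIncMatrix G R := by
  rw [Equiv.Perm.permMatrix, PEquiv.mul_toMatrix_toPEquiv]
  rfl

theorem outIncMatrix_mul_transpose_self (R : Type*) [NonAssocSemiring R] :
    outIncMatrix G R * (outIncMatrix G R)ᵀ = G.degMatrix R := by
  ext v w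
  simp only [outIncMatrix, degMatrix, mul_apply, transpose_apply, of_apply, ite_mul, one_mul,
    zero_mul, ← ite_and]
  rcases eq_or_ne v w with rfl | hvw
  · simp [Finset.sum_boole, G.dart_fst_fiber_card_eq_degree]
  · rw [diagonal_apply_ne _ hvw]
    refine Finset.sum_eq_zero fun d _ => if_neg ?_
    rintro ⟨rfl, rfl⟩
    exact hvw rfl

theorem inIncMatrix_mul_transpose_outIncMatrix (R : Type*) [NonAssocSemiring R] :
    inIncMatrix G R * (outIncMatrix G R)ᵀ = G.adjMatrix R := by
  ext v w
  simp only [inIncMatrix, outIncMatrix, mul_apply, transpose_apply, of_apply, adjMatrix_apply,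
    ite_mul, one_mul, zero_mul, ← ite_and]
  by_cases hvw : G.Adj v w
  · let d₀ : G.Dart := ⟨(w, v), hvw.symm⟩
    have hd (d : G.Dart) : d.snd = v ∧ d.fst = w ↔ d = d₀ := by
      simp [d₀, Dart.ext_iff, Prod.ext_iff, and_comm]
    simp [hd, hvw]
  · rw [if_neg hvw]
    refine Finset.sum_eq_zero fun d _ => if_neg ?_
    rintro ⟨rfl, rfl⟩
    exact hvw d.adj.symm

theorem transitionMatrix_eq_diagonal_mul_adjMatrix :
    transitionMatrix G = diagonal (fun v => (G.degree v : ℝ)⁻¹) * G.adjMatrix ℝ := by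
  ext v w
  simp [transitionMatrix, diagonal_mul, -mul_adjMatrix_apply]

/-- The matrix `B` of the factorization `U_G + J = A B` through the vertices: `inIncMatrix` with
row `v` scaled by `2 / deg v`. -/
noncomputable def weightedInIncMatrix : Matrix V G.Dart ℝ :=
  (2 : ℝ) • (diagonal (fun v => (G.degree v : ℝ)⁻¹) * inIncMatrix G ℝ)

theorem weightedInIncMatrix_apply (v : V) (d : G.Dart) :
    weightedInIncMatrix G v d = if d.snd = v then 2 / (G.degree v : ℝ) else 0 := by
  simp [weightedInIncMatrix, inIncMatrix, diagonal_mul, div_eq_mul_inv]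

theorem groverMatrix_eq_mul_sub_permMatrix :
    groverMatrix G
      = (outIncMatrix G ℝ)ᵀ * weightedInIncMatrix G - (dartReversal G).permMatrix ℝ := by
  ext e f
  rw [Matrix.sub_apply, transpose_outIncMatrix_mul_apply, weightedInIncMatrix_apply,
    permMatrix_dartReversal_apply]
  by_cases hconsec : f.snd = e.fst
  · have hdeg : G.degree f.snd = G.degree e.fst := congr_arg (fun v => G.degree v) hconsec
    by_cases hrev : f = e.symm <;> simp [groverMatrix, hrev, hconsec, hdeg]
  · have hrev : f ≠ e.symm := fun h => hconsec (congr_arg (·.snd) h)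
    simp [groverMatrix, hrev, hconsec]

theorem weightedInIncMatrix_mul_transpose_outIncMatrix :
    weightedInIncMatrix G * (outIncMatrix G ℝ)ᵀ = (2 : ℝ) • transitionMatrix G := by
  rw [weightedInIncMatrix, Matrix.smul_mul, Matrix.mul_assoc,
    inIncMatrix_mul_transpose_outIncMatrix, transitionMatrix_eq_diagonal_mul_adjMatrix]

theorem weightedInIncMatrix_mul_permMatrix_mul_transpose_outIncMatrix
    (hG : ∀ v, G.degree v ≠ 0) :
    weightedInIncMatrix G * (dartReversal G).permMatrix ℝ * (outIncMatrix G ℝ)ᵀ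
      = (2 : ℝ) • 1 := by
  rw [weightedInIncMatrix, Matrix.smul_mul, Matrix.smul_mul, Matrix.mul_assoc (diagonal _),
    inIncMatrix_mul_permMatrix_dartReversal, Matrix.mul_assoc, outIncMatrix_mul_transpose_self,
    degMatrix, diagonal_mul_diagonal]
  simp [hG]

end DartMatrices

theorem konno_sato_general {V R : Type*} [Fintype V] [DecidableEq V] [CommRing R] [Algebra ℝ R]
    (G : SimpleGraph V) [DecidableRel G.Adj] (hG : ∀ v, G.degree v ≠ 0) (u : R) :
    (1 - u ^ 2) ^ Fintype.card V *
          ((1 : Matrix G.Dart G.Dart R) - u • (groverMatrix G).map (algebraMap ℝ R)).det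
      = (1 - u ^ 2) ^ G.edgeFinset.card *
          ((1 + u ^ 2) • (1 : Matrix V V R)
            - (2 * u) • (transitionMatrix G).map (algebraMap ℝ R)).det := by
  set φ := algebraMap ℝ R
  let A : Matrix G.Dart V R := (outIncMatrix G ℝ)ᵀ.map φ
  let B : Matrix V G.Dart R := (weightedInIncMatrix G).map φ
  let J : Matrix G.Dart G.Dart R := (dartReversal G).permMatrix R
  have hJ : ((dartReversal G).permMatrix ℝ).map φ = J := PEquiv.map_toMatrix _ _
  have hU : (groverMatrix G).map φ = A * B - J := by
    rw [groverMatrix_eq_mul_sub_permMatrix, Matrix.map_sub _ (map_sub φ), Matrix.map_mul, hJ]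
  have hBA : B * A = (2 : R) • (transitionMatrix G).map φ := by
    rw [← Matrix.map_mul, weightedInIncMatrix_mul_transpose_outIncMatrix]
    ext; simp [map_ofNat φ]
  have hBJA : B * J * A = (2 : R) • 1 := by
    rw [← hJ, ← Matrix.map_mul, ← Matrix.map_mul,
      weightedInIncMatrix_mul_permMatrix_mul_transpose_outIncMatrix G hG]
    ext i j
    by_cases hij : i = j <;> simp [hij, map_ofNat φ]
  rw [hU, pow_card_mul_det_one_sub_smul_mul_sub (permMatrix_dartReversal_mul_self G R) hBJA,
    det_one_add_smul_permMatrix_dartReversal, hBA, smul_smul, mul_comm u]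

/-- **Konno–Sato theorem.** For a finite simple connected graph `G` with
`n ≥ 2` vertices and `m` edges, for every `u : ℂ`,
`(1 - u²)^n * det(I_{2m} - u • U_G) = (1 - u²)^m * det((1 + u²) • I_n - 2u • P_G)`. -/
theorem konno_sato {V : Type*} [Fintype V] [DecidableEq V]
    (G : SimpleGraph V) [DecidableRel G.Adj] (hG : G.Connected)
    (n m : ℕ) (hn : n = Fintype.card V) (hn2 : 2 ≤ n) (hm : m = G.edgeFinset.card) :
    ∀ u : ℂ,
      (1 - u ^ 2) ^ n *
          ((1 : Matrix G.Dart G.Dart ℂ) - u • (groverMatrix G).map Complex.ofReal).det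
        = (1 - u ^ 2) ^ m *
            ((1 + u ^ 2) • (1 : Matrix V V ℂ)
              - (2 * u) • (transitionMatrix G).map Complex.ofReal).det := by
  have : Nontrivial V := Fintype.one_lt_card_iff_nontrivial.mp (by omega)
  subst hn hm
  exact konno_sato_general G fun v => (hG.preconnected.degree_pos_of_nontrivial v).ne'
end

section
/- Let n ≥ 3 and let P_{C_n} be the transition probability matrix of the simple symmetric random walk on the cycle graph C_n. Then for every u ∈ ℂ, det((1 + u²)·I_n − 2u·P_{C_n}) = (1 − uⁿ)². -/
open Matrix

/-!
Let `Q` be the permutation matrix of the rotation `i ↦ i + 1`. Then `2P = Q + Qᵀ` and `Q Qᵀ = 1`,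
so the matrix factors as `(1 - uQ)(1 - uQ)ᵀ`. In the Leibniz expansion of `det (1 - uQ)` only the
identity and the rotation itself contribute, because a permutation moving each point either nowhere
or one step along a cycle must do the same at all points of the cycle; this gives `1 - uⁿ`.
-/

open Equiv Finset

section PermutationMatrices

variable {ι R : Type*} {σ : Perm ι}

theorem eq_one_or_eq_of_isCycle_of_forall_apply_eq_or_eq [Finite ι] (hσ : σ.IsCycle) {τ : Perm ι}
    (hτ : ∀ i, τ i = i ∨ τ i = σ i) : τ = 1 ∨ τ = σ := by
  have step {j : ι} (hj : σ j ≠ j) (hτj : τ j = σ j) : τ (σ j) = σ (σ j) :=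
    (hτ (σ j)).resolve_left fun hfix => hj (τ.injective (hfix.trans hτj.symm))
  refine or_iff_not_imp_left.2 fun hne => ?_
  obtain ⟨i, hi⟩ : ∃ i, τ i ≠ i := by
    contrapose! hne
    exact Perm.ext hne
  have hτi : τ i = σ i := (hτ i).resolve_left hi
  have hσi : σ i ≠ i := hτi ▸ hi
  have orbit (k : ℕ) : τ ((σ ^ k) i) = σ ((σ ^ k) i) := by
    induction k with
    | zero => exact hτi
    | succ k ih =>
      rw [pow_succ', Perm.mul_apply]
      exact step (mt (Perm.apply_pow_apply_eq_iff σ k).1 hσi) ih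
  ext j
  by_cases hσj : σ j = j
  · simpa [hσj] using hτ j
  · obtain ⟨k, rfl⟩ := hσ.exists_pow_eq hσi hσj
    exact orbit k

variable [Fintype ι] [DecidableEq ι]

theorem permMatrix_mul_transpose_self [NonAssocSemiring R] (σ : Perm ι) :
    σ.permMatrix R * (σ.permMatrix R)ᵀ = 1 := by
  rw [transpose_permMatrix, ← permMatrix_mul, inv_mul_cancel, permMatrix_one]

variable [CommRing R]

theorem det_eq_prod_diag_add_sign_mul_prod_of_isCycle (hσ : σ.IsCycle) {A : Matrix ι ι R}
    (hA : ∀ i j, j ≠ i → j ≠ σ i → A i j = 0) :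
    A.det = ∏ i, A i i + Perm.sign σ * ∏ i, A i (σ i) := by
  have vanish (τ : Perm ι) (hτ : τ ≠ 1 ∧ τ ≠ σ) :
      (Perm.sign τ : R) * ∏ i, Aᵀ (τ i) i = 0 := by
    obtain ⟨i, hi, hσi⟩ : ∃ i, τ i ≠ i ∧ τ i ≠ σ i := by
      contrapose! hτ
      exact (eq_one_or_eq_of_isCycle_of_forall_apply_eq_or_eq hσ
        fun i => or_iff_not_imp_left.2 (hτ i)).resolve_left
    rw [prod_eq_zero (mem_univ i) (hA i (τ i) hi hσi), mul_zero]
  rw [← det_transpose, det_apply', Fintype.sum_eq_add 1 σ hσ.ne_one.symm vanish]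
  simp only [Perm.sign_one, Units.val_one, Int.cast_one, one_mul, Perm.one_apply, transpose_apply]

theorem det_one_sub_smul_permMatrix_of_isCycle (hσ : σ.IsCycle) (u : R) :
    (1 - u • σ.permMatrix R).det = (1 - u) ^ #σ.supportᶜ * (1 - u ^ #σ.support) := by
  have entry (i j : ι) : (1 - u • σ.permMatrix R) i j =
      (if j = i then 1 else 0) - u * (if σ i = j then 1 else 0) := by
    simp [one_apply, PEquiv.toMatrix_apply, eq_comm]
  have diag : ∏ i, (1 - u • σ.permMatrix R) i i = (1 - u) ^ #σ.supportᶜ := by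
    rw [← prod_compl_mul_prod σ.support, prod_eq_pow_card (b := 1 - u), prod_eq_one, mul_one]
    all_goals simp +contextual [entry]
  have off_diag : ∏ i, (1 - u • σ.permMatrix R) i (σ i) =
      (1 - u) ^ #σ.supportᶜ * (-u) ^ #σ.support := by
    rw [← prod_compl_mul_prod σ.support, prod_eq_pow_card (b := 1 - u),
      prod_eq_pow_card (b := -u)]
    all_goals simp +contextual [entry]
  have sign_mul : (Perm.sign σ : R) * (-u) ^ #σ.support = -u ^ #σ.support := by
    simp [hσ.sign, ← mul_pow]
  rw [det_eq_prod_diag_add_sign_mul_prod_of_isCycle hσ, diag, off_diag]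
  · linear_combination (1 - u) ^ #σ.supportᶜ * sign_mul
  · intro i j hi hσi
    simp [entry, hi, hσi.symm]

theorem det_one_add_sq_smul_one_sub_smul_add_transpose {Q : Matrix ι ι R} (hQ : Q * Qᵀ = 1)
    (u : R) :
    ((1 + u ^ 2) • (1 : Matrix ι ι R) - u • (Q + Qᵀ)).det = (1 - u • Q).det ^ 2 := by
  have factor : (1 + u ^ 2) • (1 : Matrix ι ι R) - u • (Q + Qᵀ) =
      (1 - u • Q) * (1 - u • Q)ᵀ := by
    rw [transpose_sub, transpose_one, transpose_smul, sub_mul, mul_sub, mul_sub,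
      smul_mul_smul_comm, hQ, one_mul, one_mul, mul_one]
    module
  rw [factor, det_mul, det_transpose, sq]

end PermutationMatrices

section Rotation

theorem support_addRight {G : Type*} [AddGroup G] [Fintype G] [DecidableEq G] {g : G}
    (hg : g ≠ 0) : (Equiv.addRight g).support = univ := by
  ext x
  simp [hg]

variable {n : ℕ}

theorem isCycle_addRight_one [Nontrivial (ZMod n)] :
    (Equiv.addRight (1 : ZMod n)).IsCycle :=
  ⟨0, by simp, fun j _ => ⟨(j.cast : ℤ), by simp⟩⟩

theorem det_one_sub_smul_permMatrix_addRight_one {R : Type*} [CommRing R] [NeZero n]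
    [Nontrivial (ZMod n)] (u : R) :
    (1 - u • (Equiv.addRight (1 : ZMod n)).permMatrix R).det = 1 - u ^ n := by
  rw [det_one_sub_smul_permMatrix_of_isCycle isCycle_addRight_one,
    support_addRight one_ne_zero, compl_univ, card_empty, pow_zero, one_mul, card_univ, ZMod.card]

theorem two_smul_eq_permMatrix_add_transpose {R : Type*} [Semiring R] [Invertible (2 : R)]
    (hn : 3 ≤ n) {P : Matrix (ZMod n) (ZMod n) R}
    (hP : ∀ i j : ZMod n, P i j = if j = i + 1 ∨ j = i - 1 then ⅟2 else 0) :
    (2 : R) • P =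
      (Equiv.addRight (1 : ZMod n)).permMatrix R +
        ((Equiv.addRight (1 : ZMod n)).permMatrix R)ᵀ := by
  have : Fact (2 < n) := ⟨hn⟩
  have next_ne_prev (i : ZMod n) : i + 1 ≠ i - 1 := by
    simpa [sub_eq_add_neg] using (ZMod.neg_one_ne_one (n := n)).symm
  have entry (i j : ZMod n) :
      (Equiv.addRight (1 : ZMod n)).permMatrix R i j = if j = i + 1 then 1 else 0 := by
    simp [PEquiv.toMatrix_apply, eq_comm]
  ext i j
  have eq_next_iff : i = j + 1 ↔ j = i - 1 := by rw [eq_sub_iff_add_eq, eq_comm]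
  simp only [Matrix.smul_apply, smul_eq_mul, Matrix.add_apply, transpose_apply, entry, hP,
    eq_next_iff]
  by_cases hnext : j = i + 1
  · simp [hnext, next_ne_prev i]
  · by_cases hprev : j = i - 1 <;> simp [hnext, hprev, (next_ne_prev i).symm]

end Rotation

theorem cycle_transition_det_general {R : Type*} [CommRing R] [Invertible (2 : R)] {n : ℕ}
    [NeZero n] (hn : 3 ≤ n) (P : Matrix (ZMod n) (ZMod n) R)
    (hP : ∀ i j : ZMod n, P i j = if j = i + 1 ∨ j = i - 1 then ⅟2 else 0) (u : R) :
    ((1 + u ^ 2) • (1 : Matrix (ZMod n) (ZMod n) R) - (2 * u) • P).det = (1 - u ^ n) ^ 2 := by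
  have : Fact (1 < n) := ⟨by lia⟩
  rw [mul_comm 2 u, mul_smul, two_smul_eq_permMatrix_add_transpose hn hP,
    det_one_add_sq_smul_one_sub_smul_add_transpose (permMatrix_mul_transpose_self _),
    det_one_sub_smul_permMatrix_addRight_one]

/-- For `n ≥ 3`, the transition probability matrix `P` of the simple
symmetric random walk on the cycle graph `C_n` (so `P i j = 1/2` iff `j = i ± 1 (mod n)`)
satisfies `det((1 + u²) • I_n - 2u • P) = (1 - uⁿ)²` for every `u : ℂ`. -/
theorem cycle_transition_det (n : ℕ) [NeZero n] (hn : 3 ≤ n)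
    (P : Matrix (ZMod n) (ZMod n) ℂ)
    (hP : ∀ i j : ZMod n, P i j = if j = i + 1 ∨ j = i - 1 then 1 / 2 else 0) :
    ∀ u : ℂ,
      ((1 + u ^ 2) • (1 : Matrix (ZMod n) (ZMod n) ℂ) - (2 * u) • P).det
        = (1 - u ^ n) ^ 2 := by
  have := invertibleOfNonzero (two_ne_zero (α := ℂ))
  exact cycle_transition_det_general hn P (by simpa using hP)
end

section
/- Let n ≥ 3 and let U_{C_n} be the Grover matrix of the cycle graph C_n. Then for every u ∈ ℂ, det(I_{2n} − u·U_{C_n}) = (uⁿ − 1)². Equivalently, the zeta function ζ_{U_{C_n}}(u) = (det(I_{2n} − u·U_{C_n}))⁻¹ equals 1/(uⁿ − 1)². -/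
open Matrix

/-!
Listing the clockwise arcs of `C_n` before the anticlockwise ones makes `U` block diagonal, with
blocks the permutation matrices of the rotation `i ↦ i + 1` and of its inverse. For a full cycle
`σ` on `n` points, a permutation `τ` contributes to the Leibniz expansion of `det (1 - u • P_σ)`
only if each `τ i` is `i` or `σ i`. Injectivity of `τ` makes the choice spread along the cycle, so
`τ = 1` or `τ = σ`, and the two terms add up to `1 - u ^ n`.
-/

section FullCycle

open Equiv Finset

variable {ι R : Type*} {σ τ : Perm ι}

theorem apply_apply_eq_iff_of_forall_eq_or_eq (h : ∀ i, τ i = i ∨ τ i = σ i) (i : ι) :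
    τ (σ i) = σ (σ i) ↔ τ i = σ i := by
  refine ⟨fun hi => ?_, fun hi => ?_⟩
  · obtain ⟨j, hj⟩ := τ.surjective (σ i)
    rcases h j with hfix | hmove
    · obtain rfl : j = σ i := hfix.symm.trans hj
      have hσi : σ i = i := σ.injective (hi.symm.trans hfix)
      rwa [hσi] at hi
    · obtain rfl : j = i := σ.injective (hmove.symm.trans hj)
      exact hj
  · rcases h (σ i) with hfix | hmove
    · have hσi : σ i = i := τ.injective (hfix.trans hi.symm)
      rwa [hσi]
    · exact hmove

theorem eq_one_or_eq_of_isCycleOn_univ (hσ : σ.IsCycleOn Set.univ)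
    (h : ∀ i, τ i = i ∨ τ i = σ i) : τ = 1 ∨ τ = σ := by
  have hbij : Set.BijOn σ {i | τ i = σ i} {i | τ i = σ i} :=
    σ.bijOn (apply_apply_eq_iff_of_forall_eq_or_eq h)
  by_cases hmoved : ∃ i, τ i = σ i
  · obtain ⟨i, hi⟩ := hmoved
    refine .inr (Equiv.ext fun j => ?_)
    obtain ⟨k, rfl⟩ := hσ.2 (Set.mem_univ i) (Set.mem_univ j)
    exact (hbij.perm_zpow k).mapsTo hi
  · exact .inl (Equiv.ext fun i => (h i).resolve_right fun hi => hmoved ⟨i, hi⟩)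

variable [Fintype ι] [DecidableEq ι]

theorem sign_of_isCycleOn_univ [Nonempty ι] (hσ : σ.IsCycleOn Set.univ) :
    Perm.sign σ = -(-1) ^ Fintype.card ι := by
  rcases subsingleton_or_nontrivial ι with _ | _
  · have hcard : Fintype.card ι = 1 :=
      le_antisymm (Fintype.card_le_one_iff_subsingleton.2 ‹_›) Fintype.card_pos
    simp [Subsingleton.elim σ 1, hcard]
  · have hne (i : ι) : σ i ≠ i := hσ.apply_ne Set.nontrivial_univ (Set.mem_univ i)
    have hcycle : σ.IsCycle :=
      Perm.isCycle_iff_exists_isCycleOn.2 ⟨_, Set.nontrivial_univ, hσ, fun _ _ => Set.mem_univ _⟩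
    have hsupp : σ.support = univ := eq_univ_of_forall fun i => Perm.mem_support.2 (hne i)
    simp [hcycle.sign, hsupp]

variable [CommRing R] [Nonempty ι]

theorem det_diagonal_add_diagonal_mul_permMatrix_of_isCycleOn_univ
    (hσ : σ.IsCycleOn Set.univ) (d w : ι → R) :
    (diagonal d + diagonal w * σ.permMatrix R).det =
      ∏ i, d i + (Perm.sign σ : R) * ∏ i, w i := by
  have happly (i j : ι) : (diagonal d + diagonal w * σ.permMatrix R) i j =
      (if j = i then d i else 0) + if j = σ i then w i else 0 := by
    simp [diagonal_apply, toPEquiv_apply, PEquiv.toMatrix_apply, eq_comm]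
  rcases subsingleton_or_nontrivial ι with _ | _
  · -- Here `1 = σ`, and the two terms come from the two summands of the only entry `d i + w i`.
    obtain ⟨i⟩ := ‹Nonempty ι›
    rw [det_eq_elem_of_subsingleton _ i, happly, Subsingleton.elim σ 1]
    simp [Fintype.prod_subsingleton _ i]
  have hne (i : ι) : σ i ≠ i := hσ.apply_ne Set.nontrivial_univ (Set.mem_univ i)
  have hne_one : (1 : Perm ι) ≠ σ := by
    rintro rfl
    exact hne (Classical.arbitrary ι) rfl
  have hvanish (τ : Perm ι) (hτ : τ ≠ 1 ∧ τ ≠ σ) :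
      (Perm.sign τ : R) * ∏ i, (diagonal d + diagonal w * σ.permMatrix R) i (τ i) = 0 := by
    obtain ⟨i, hi⟩ : ∃ i, ¬(τ i = i ∨ τ i = σ i) := by
      by_contra! h
      exact (eq_one_or_eq_of_isCycleOn_univ hσ h).elim hτ.1 hτ.2
    rw [prod_eq_zero (mem_univ i), mul_zero]
    simp [happly, not_or.1 hi]
  rw [← det_transpose, det_apply']
  simp only [transpose_apply]
  rw [Fintype.sum_eq_add 1 σ hne_one hvanish]
  simp [happly, hne, (hne _).symm]

theorem det_one_sub_smul_permMatrix_of_isCycleOn_univ (hσ : σ.IsCycleOn Set.univ) (u : R) :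
    (1 - u • σ.permMatrix R).det = 1 - u ^ Fintype.card ι := by
  have h : 1 - u • σ.permMatrix R =
      diagonal (fun _ => 1) + diagonal (fun _ => -u) * σ.permMatrix R := by
    rw [diagonal_one, ← smul_eq_diagonal_mul, neg_smul, sub_eq_add_neg]
  rw [h, det_diagonal_add_diagonal_mul_permMatrix_of_isCycleOn_univ hσ]
  have hsign : ((Perm.sign σ : ℤ) : R) = -(-1) ^ Fintype.card ι := by
    simp [sign_of_isCycleOn_univ hσ]
  simp [hsign, ← mul_pow, ← sub_eq_add_neg]

end FullCycle

theorem isCycleOn_univ_addRight {G : Type*} [AddGroup G] {g : G}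
    (hg : ∀ x, x ∈ AddSubgroup.zmultiples g) : (Equiv.addRight g).IsCycleOn Set.univ := by
  refine ⟨Set.bijOn_univ.2 (Equiv.bijective _), fun x _ y _ => ?_⟩
  obtain ⟨k, hk⟩ := AddSubgroup.mem_zmultiples_iff.1 (hg (-x + y))
  exact ⟨k, by simp [hk]⟩

theorem cycle_grover_det_general {R : Type*} [CommRing R] (n : ℕ) [NeZero n]
    (U : Matrix (ZMod n × Fin 2) (ZMod n × Fin 2) R)
    (hU : ∀ (i j : ZMod n) (a b : Fin 2),
      U (i, a) (j, b) =
        if j = i + 1 ∧ a = 0 ∧ b = 0 then 1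
        else if j = i - 1 ∧ a = 1 ∧ b = 1 then 1 else 0) (u : R) :
    (1 - u • U).det = (u ^ n - 1) ^ 2 := by
  have hσ : (Equiv.addRight (1 : ZMod n)).IsCycleOn Set.univ :=
    isCycleOn_univ_addRight fun x => ⟨x.cast, by simp⟩
  set σ := Equiv.addRight (1 : ZMod n)
  have hblock : U = blockDiagonal ![σ.permMatrix R, σ⁻¹.permMatrix R] := by
    ext ⟨i, a⟩ ⟨j, b⟩
    fin_cases a <;> fin_cases b <;>
      simp [hU, σ, blockDiagonal_apply, PEquiv.toMatrix_apply, Equiv.toPEquiv_apply, eq_comm,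
        sub_eq_add_neg]
  have hfactor : 1 - u • U =
      blockDiagonal (1 - u • ![σ.permMatrix R, σ⁻¹.permMatrix R]) := by
    rw [hblock, blockDiagonal_sub, blockDiagonal_one, blockDiagonal_smul]
  calc (1 - u • U).det
      = (1 - u • σ.permMatrix R).det * (1 - u • σ⁻¹.permMatrix R).det := by
        rw [hfactor, det_blockDiagonal, Fin.prod_univ_two]; rfl
    _ = (1 - u ^ n) * (1 - u ^ n) := by
        rw [det_one_sub_smul_permMatrix_of_isCycleOn_univ hσ,
          det_one_sub_smul_permMatrix_of_isCycleOn_univ hσ.inv, ZMod.card]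
    _ = (u ^ n - 1) ^ 2 := by ring

/-- For `n ≥ 3`, the Grover matrix `U` of the cycle graph `C_n`
(the `2n × 2n` matrix with `2 × 2` blocks `P = [[1,0],[0,0]]` at position `(i, i+1)`,
`Q = [[0,0],[0,1]]` at position `(i, i-1)`, and `0` elsewhere) satisfies
`det(I_{2n} - u • U) = (uⁿ - 1)²` for every `u : ℂ`; equivalently
`ζ_{U}(u) = det(I_{2n} - u • U)⁻¹ = 1 / (uⁿ - 1)²`. -/
theorem cycle_grover_det (n : ℕ) [NeZero n] (hn : 3 ≤ n)
    (U : Matrix (ZMod n × Fin 2) (ZMod n × Fin 2) ℂ)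
    (hU : ∀ (i j : ZMod n) (a b : Fin 2),
      U (i, a) (j, b) =
        if j = i + 1 ∧ a = 0 ∧ b = 0 then 1
        else if j = i - 1 ∧ a = 1 ∧ b = 1 then 1 else 0) :
    ∀ u : ℂ,
      ((1 : Matrix (ZMod n × Fin 2) (ZMod n × Fin 2) ℂ) - u • U).det = (u ^ n - 1) ^ 2 :=
  cycle_grover_det_general n U hU
end

section
/- Let n ≥ 3 and let U_{C_n} be the Grover matrix of the cycle graph C_n. Then for every λ ∈ ℂ, det(λ·I_{2n} − U_{C_n}) = ∏_{k=1}^{n} (λ − e^{2πik/n})·(λ − e^{−2πik/n}). In particular, the spectrum of U_{C_n} is {e^{2πik/n}, e^{−2πik/n} : k = 1, …, n}, each eigenvalue counted with the indicated multiplicity. -/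
open Matrix Complex

/-!
Splitting the arcs of `C_n` by orientation turns the Grover matrix into the block diagonal matrix
with blocks `S` and `Sᵀ`, where `S` is the cyclic shift. The powers `1, S, …, S ^ (n - 1)` are
linearly independent and `S ^ n = 1`, so by Cayley–Hamilton the characteristic polynomial of `S`,
and hence that of `Sᵀ`, is `X ^ n - 1`. Over a field containing a primitive `n`-th root of unity
`ζ`, one copy of `X ^ n - 1` is factored along the powers of `ζ` and the other along those of `ζ⁻¹`.
-/

open Polynomial (X C aeval IsMonicOfDegree)
open scoped Polynomial

section PermMatrix

variable {ι R : Type*} [DecidableEq ι] [Fintype ι]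

lemma permMatrix_pow [Semiring R] (σ : Equiv.Perm ι) (k : ℕ) :
    (σ ^ k).permMatrix R = σ.permMatrix R ^ k := by
  induction k with
  | zero => exact permMatrix_one
  | succ k ih => rw [pow_succ', permMatrix_mul, ih, pow_succ]

variable [CommRing R] {σ : Equiv.Perm ι}

lemma eq_zero_of_aeval_permMatrix_eq_zero (hσ : σ.IsCycleOn Set.univ) {p : R[X]}
    (hdeg : p.natDegree < Fintype.card ι) (hp : aeval (σ.permMatrix R) p = 0) : p = 0 := by
  obtain ⟨x⟩ : Nonempty ι := Fintype.card_pos_iff.mp (Nat.zero_lt_of_lt hdeg)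
  have pow_apply_inj {k m : ℕ} (hk : k < Fintype.card ι) (hm : m < Fintype.card ι) :
      (σ ^ k) x = (σ ^ m) x ↔ k = m := by
    rw [← Finset.coe_univ] at hσ
    rw [hσ.pow_apply_eq_pow_apply (Finset.mem_univ x)]
    exact ⟨fun h ↦ h.eq_of_lt_of_lt hk hm, fun h ↦ h ▸ rfl⟩
  -- Since `x, σ x, σ² x, …` are distinct, row `x` of `p(σ)` lists the coefficients of `p`.
  have aeval_apply {m : ℕ} (hm : m < Fintype.card ι) :
      aeval (σ.permMatrix R) p x ((σ ^ m) x) = p.coeff m := by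
    calc
      _ = ∑ k ∈ Finset.range (Fintype.card ι),
            if (σ ^ k) x = (σ ^ m) x then p.coeff k else 0 := by
        simp [Polynomial.aeval_eq_sum_range' hdeg, ← permMatrix_pow, Matrix.sum_apply,
          PEquiv.toMatrix_apply, eq_comm]
      _ = ∑ k ∈ Finset.range (Fintype.card ι), if k = m then p.coeff k else 0 :=
        Finset.sum_congr rfl fun k hk ↦ by simp only [pow_apply_inj (Finset.mem_range.mp hk) hm]
      _ = p.coeff m := by simp [hm]
  ext m
  obtain hm | hm := lt_or_ge m (Fintype.card ι)
  · simp [← aeval_apply hm, hp]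
  · exact Polynomial.coeff_eq_zero_of_natDegree_lt (hdeg.trans_le hm)

theorem charpoly_permMatrix_of_isCycleOn [Nonempty ι] (hσ : σ.IsCycleOn Set.univ) :
    (σ.permMatrix R).charpoly = X ^ Fintype.card ι - 1 := by
  nontriviality R
  have pow_card : σ ^ Fintype.card ι = 1 := by
    rw [← Finset.coe_univ] at hσ
    exact Equiv.ext fun x ↦ hσ.pow_card_apply (Finset.mem_univ x)
  have charpoly_monic : IsMonicOfDegree (σ.permMatrix R).charpoly (Fintype.card ι) :=
    ⟨charpoly_natDegree_eq_dim _, Matrix.charpoly_monic _⟩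
  have X_pow_sub_one_monic : IsMonicOfDegree (X ^ Fintype.card ι - 1 : R[X]) (Fintype.card ι) :=
    (Polynomial.isMonicOfDegree_X_pow R _).sub (by simp [Fintype.card_pos])
  refine sub_eq_zero.mp (eq_zero_of_aeval_permMatrix_eq_zero hσ
    (charpoly_monic.natDegree_sub_lt Fintype.card_ne_zero X_pow_sub_one_monic) ?_)
  simp [aeval_self_charpoly, ← permMatrix_pow, pow_card]

end PermMatrix

lemma isCycleOn_zmod_addRight_one (n : ℕ) [NeZero n] :
    (Equiv.addRight (1 : ZMod n)).IsCycleOn Set.univ := by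
  refine ⟨Set.bijOn_univ.mpr (Equiv.bijective _), fun x _ y _ ↦ ?_⟩
  obtain ⟨k, hk⟩ := ZMod.natCast_zmod_surjective (y - x)
  refine ⟨k, ?_⟩
  rw [zpow_natCast, ← Equiv.Perm.iterate_eq_pow, Equiv.coe_addRight, add_right_iterate]
  simp [hk]

lemma charpoly_blockDiagonal {ι o R : Type*} [DecidableEq ι] [Fintype ι] [DecidableEq o]
    [Fintype o] [CommRing R] (M : o → Matrix ι ι R) :
    (blockDiagonal M).charpoly = ∏ k, (M k).charpoly := by
  have charmatrix_eq : (blockDiagonal M).charmatrix = blockDiagonal fun k ↦ (M k).charmatrix := by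
    ext1 ⟨i, k⟩ ⟨j, l⟩
    by_cases hkl : k = l <;> simp [charmatrix_apply, blockDiagonal_apply, diagonal_apply, hkl]
  simp only [Matrix.charpoly, charmatrix_eq, det_blockDiagonal]

section CycleGrover

/-- The Grover matrix of the cycle graph `C_n`, with entries `0` and `1` taken in `R`. The index
`(i, a)` stands for row or column `a` of the `2 × 2` block at vertex `i`. -/
def cycleGroverMatrix (n : ℕ) (R : Type*) [Zero R] [One R] :
    Matrix (ZMod n × Fin 2) (ZMod n × Fin 2) R :=
  .of fun (i, a) (j, b) ↦
    if j = i + 1 ∧ a = 0 ∧ b = 0 then 1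
    else if j = i - 1 ∧ a = 1 ∧ b = 1 then 1 else 0

lemma cycleGroverMatrix_eq_blockDiagonal (n : ℕ) (R : Type*) [Zero R] [One R] :
    cycleGroverMatrix n R =
      blockDiagonal ![(Equiv.addRight 1).permMatrix R, ((Equiv.addRight 1).permMatrix R)ᵀ] := by
  ext ⟨i, a⟩ ⟨j, b⟩
  have eq_sub_one_iff : j = i - 1 ↔ j + 1 = i := eq_sub_iff_add_eq
  fin_cases a <;> fin_cases b <;>
    simp [cycleGroverMatrix, blockDiagonal_apply, eq_sub_one_iff, PEquiv.toMatrix_apply,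
      eq_comm, -transpose_permMatrix]

theorem charpoly_cycleGroverMatrix (n : ℕ) [NeZero n] (R : Type*) [CommRing R] :
    (cycleGroverMatrix n R).charpoly = (X ^ n - 1) ^ 2 := by
  rw [cycleGroverMatrix_eq_blockDiagonal, charpoly_blockDiagonal, Fin.prod_univ_two]
  simp only [cons_val_zero, cons_val_one, charpoly_transpose,
    charpoly_permMatrix_of_isCycleOn (isCycleOn_zmod_addRight_one n), ZMod.card, sq]

lemma X_pow_sub_one_eq_prod_Icc {R : Type*} [CommRing R] [IsDomain R] {n : ℕ} [NeZero n] {ζ : R}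
    (hζ : IsPrimitiveRoot ζ n) : (X ^ n - 1 : R[X]) = ∏ k ∈ Finset.Icc 1 n, (X - C (ζ ^ k)) := by
  rw [← Finset.Ico_add_one_right_eq_Icc, ← Finset.prod_Ico_add' _ 0 n 1, Nat.Ico_zero_eq_range]
  simpa only [Polynomial.C_1, pow_succ] using X_pow_sub_C_eq_prod hζ (NeZero.pos n) hζ.pow_eq_one

variable {K : Type*} [Field K] {n : ℕ} [NeZero n] {ζ : K}

theorem charpoly_cycleGroverMatrix_eq_prod (hζ : IsPrimitiveRoot ζ n) :
    (cycleGroverMatrix n K).charpoly =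
      ∏ k ∈ Finset.Icc 1 n, ((X - C (ζ ^ k)) * (X - C (ζ ^ k)⁻¹)) := by
  simp_rw [charpoly_cycleGroverMatrix, sq, Finset.prod_mul_distrib, ← inv_pow,
    ← X_pow_sub_one_eq_prod_Icc hζ, ← X_pow_sub_one_eq_prod_Icc hζ.inv]

theorem cycle_grover_char_poly_general (hζ : IsPrimitiveRoot ζ n) :
    (∀ lam : K, (lam • 1 - cycleGroverMatrix n K).det =
      ∏ k ∈ Finset.Icc 1 n, ((lam - ζ ^ k) * (lam - (ζ ^ k)⁻¹))) ∧
    spectrum K (cycleGroverMatrix n K) =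
      {z | ∃ k ∈ Finset.Icc 1 n, z = ζ ^ k ∨ z = (ζ ^ k)⁻¹} := by
  have eval_charpoly_eq (lam : K) : (cycleGroverMatrix n K).charpoly.eval lam =
      ∏ k ∈ Finset.Icc 1 n, ((lam - ζ ^ k) * (lam - (ζ ^ k)⁻¹)) := by
    simp [charpoly_cycleGroverMatrix_eq_prod hζ, Polynomial.eval_prod]
  constructor
  · intro lam
    rw [← eval_charpoly_eq, eval_charpoly, scalar_apply, smul_one_eq_diagonal]
  · ext z
    rw [mem_spectrum_iff_isRoot_charpoly, Polynomial.IsRoot.def, eval_charpoly_eq]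
    simp only [Finset.prod_eq_zero_iff, mul_eq_zero, sub_eq_zero, Set.mem_ofPred_eq]

end CycleGrover

lemma exp_mul_natCast_div (z w : ℂ) (k : ℕ) : exp (z * k / w) = exp (z / w) ^ k := by
  rw [← exp_nat_mul]
  ring_nf

/-- For `n ≥ 3`, the Grover matrix `U` of the cycle graph `C_n`
(the `2n × 2n` matrix with `2 × 2` blocks `P = [[1,0],[0,0]]` at position `(i, i+1)`,
`Q = [[0,0],[0,1]]` at position `(i, i-1)`, and `0` elsewhere) satisfies
`det(λ • I_{2n} - U) = ∏_{k=1}^{n} (λ - e^{2πik/n})(λ - e^{-2πik/n})` for every `λ : ℂ`;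
in particular the spectrum of `U` is `{e^{2πik/n}, e^{-2πik/n} : k = 1, …, n}`, each
eigenvalue with the multiplicity indicated by the product. -/
theorem cycle_grover_char_poly (n : ℕ) [NeZero n] (hn : 3 ≤ n)
    (U : Matrix (ZMod n × Fin 2) (ZMod n × Fin 2) ℂ)
    (hU : ∀ (i j : ZMod n) (a b : Fin 2),
      U (i, a) (j, b) =
        if j = i + 1 ∧ a = 0 ∧ b = 0 then 1
        else if j = i - 1 ∧ a = 1 ∧ b = 1 then 1 else 0) :
    (∀ lam : ℂ,
      (lam • (1 : Matrix (ZMod n × Fin 2) (ZMod n × Fin 2) ℂ) - U).det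
        = ∏ k ∈ Finset.Icc 1 n,
            ((lam - Complex.exp (2 * Real.pi * Complex.I * k / n)) *
              (lam - Complex.exp (-(2 * Real.pi * Complex.I * k / n))))) ∧
    spectrum ℂ U = {z : ℂ | ∃ k ∈ Finset.Icc 1 n,
      z = Complex.exp (2 * Real.pi * Complex.I * k / n) ∨
        z = Complex.exp (-(2 * Real.pi * Complex.I * k / n))} := by
  obtain rfl : U = cycleGroverMatrix n ℂ := Matrix.ext fun ⟨i, a⟩ ⟨j, b⟩ ↦ hU i j a b
  simpa only [exp_neg, exp_mul_natCast_div] using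
    cycle_grover_char_poly_general (isPrimitiveRoot_exp n (NeZero.ne n))
end

section
/- Let N be a positive integer and let w, s ∈ ℂ with Re(w) > 2 and Re(s) > 0. Then (1/Γ(w)) · ∫₀^∞ e^{−st}·(e^{Nt} − 1)^{−2}·t^{w−1} dt = Σ_{n₁=0}^{∞} Σ_{n₂=0}^{∞} (s + 2N + (n₁ + n₂)·N)^{−w}, where both the integral and the double series converge absolutely. -/
open MeasureTheory Complex

/-!
For `Re z > 0` the Mellin transform of `t ↦ exp (-z t)` at `w` is `z ^ (-w) Γ(w)`: this is Euler's
integral for real `z`, and both sides are holomorphic in `z` on the right half-plane. Expanding each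
factor of `exp (-s t) ∏ᵢ (1 - exp (-ωᵢ t))⁻¹` as a geometric series turns this kernel into
`∑ₙ exp (-(s + n · ω) t)`, so integrating term by term gives the multiple Hurwitz zeta function.
The kernel is `O(t ^ (-r))` at `0` and decays exponentially at infinity, so its Mellin integral
converges for `Re w > r`. Applied to the real parts of `s` and `ω`, where all terms are positive,
this convergence bounds the partial sums of `∑ₙ Re (s + n · ω) ^ (-Re w)` and thereby justifies the
termwise integration. Finally, `exp (-s t) (exp (N t) - 1)⁻²` is the kernel of order 2 with shift
`s + 2N` and periods `(N, N)`.
-/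

section

open Set Filter Topology Asymptotics

section FiniteProducts

variable {R : Type*} [NormedCommRing R] {r : ℕ} {β : Fin r → Type*} {f : ∀ i, β i → R}

lemma summable_norm_prod_pi (hf : ∀ i, Summable fun k => ‖f i k‖) :
    Summable fun n : ∀ i, β i => ‖∏ i, f i (n i)‖ := by
  induction r with
  | zero => exact (hasSum_unique _).summable
  | succ r ih =>
    rw [← (Fin.consEquiv β).summable_iff]
    simpa only [Function.comp_def, Fin.prod_univ_succ, Fin.consEquiv_apply, Fin.cons_zero,
      Fin.cons_succ] using (hf 0).mul_norm (ih fun i => hf i.succ)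

lemma hasSum_prod_pi [CompleteSpace R] {a : Fin r → R} (hf : ∀ i, Summable fun k => ‖f i k‖)
    (ha : ∀ i, HasSum (f i) (a i)) :
    HasSum (fun n : ∀ i, β i => ∏ i, f i (n i)) (∏ i, a i) := by
  induction r with
  | zero => simp
  | succ r ih =>
    have htail := ih (fun i => hf i.succ) fun i => ha i.succ
    have hsummable := summable_mul_of_summable_norm (hf 0)
      (summable_norm_prod_pi fun i : Fin r => hf i.succ)
    rw [← (Fin.consEquiv β).hasSum_iff, Fin.prod_univ_succ]
    simpa only [Function.comp_def, Fin.prod_univ_succ, Fin.consEquiv_apply, Fin.cons_zero,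
      Fin.cons_succ] using (ha 0).mul htail hsummable

end FiniteProducts

lemma norm_cexp_neg_mul_ofReal (z : ℂ) (t : ℝ) : ‖cexp (-(z * t))‖ = Real.exp (-(z.re * t)) := by
  simp [norm_exp]

lemma isBigO_cexp_neg_mul_atTop (z : ℂ) :
    (fun t : ℝ => cexp (-(z * t))) =O[atTop] fun t => Real.exp (-z.re * t) :=
  .of_norm_le fun t => by rw [norm_cexp_neg_mul_ofReal, neg_mul]

lemma isBigO_cexp_neg_mul_nhdsGT_zero (z : ℂ) :
    (fun t : ℝ => cexp (-(z * t))) =O[𝓝[>] 0] fun _ => (1 : ℝ) :=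
  (Continuous.tendsto (by fun_prop) 0).isBigO_one ℝ |>.mono nhdsWithin_le_nhds

lemma norm_cpow_smul_cexp_neg_mul (a z : ℂ) {t : ℝ} (ht : 0 < t) :
    ‖(t : ℂ) ^ (a - 1) • cexp (-(z * t))‖ = t ^ (a.re - 1) * Real.exp (-(z.re * t)) := by
  rw [norm_smul, norm_cpow_eq_rpow_re_of_pos ht, norm_cexp_neg_mul_ofReal, sub_re, one_re]

lemma mellinConvergent_cexp_neg_mul {a z : ℂ} (ha : 0 < a.re) (hz : 0 < z.re) :
    MellinConvergent (fun t => cexp (-(z * t))) a :=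
  mellinConvergent_of_isBigO_rpow_exp hz
    (Continuous.locallyIntegrable (by fun_prop) |>.locallyIntegrableOn _)
    (isBigO_cexp_neg_mul_atTop z) (by simpa using isBigO_cexp_neg_mul_nhdsGT_zero z) ha

lemma hasDerivAt_mellin_cexp_neg_mul {a z : ℂ} (ha : 0 < a.re) (hz : 0 < z.re) :
    HasDerivAt (fun z => mellin (fun t => cexp (-(z * t))) a)
      (-mellin (fun t => cexp (-(z * t))) (a + 1)) z := by
  have hz₂ : 0 < (z / 2).re := by simpa using hz
  have ha₁ : 0 < (a + 1).re := by simpa using by linarith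
  have hconv := mellinConvergent_cexp_neg_mul ha₁ hz
  rw [mellin, ← integral_neg]
  refine (hasDerivAt_integral_of_dominated_loc_of_deriv_le
    (F := fun (x : ℂ) (t : ℝ) => (t : ℂ) ^ (a - 1) • cexp (-(x * t)))
    (F' := fun (x : ℂ) (t : ℝ) => -((t : ℂ) ^ (a + 1 - 1) • cexp (-(x * t))))
    (bound := fun t : ℝ => ‖(t : ℂ) ^ (a + 1 - 1) • cexp (-(z / 2 * t))‖)
    ((isOpen_re_gt (z / 2).re).mem_nhds (by simpa using hz))
    (.of_forall fun x => Measurable.aestronglyMeasurable (by fun_prop))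
    (mellinConvergent_cexp_neg_mul ha hz) hconv.aestronglyMeasurable.neg ?_
    (mellinConvergent_cexp_neg_mul ha₁ hz₂).norm ?_).2
  · filter_upwards [ae_restrict_mem measurableSet_Ioi] with t (ht : 0 < t) x (hx : _ < x.re)
    rw [norm_neg, norm_cpow_smul_cexp_neg_mul _ _ ht, norm_cpow_smul_cexp_neg_mul _ _ ht]
    gcongr
  · filter_upwards [ae_restrict_mem measurableSet_Ioi] with t (ht : 0 < t) x _
    have hpow : (t : ℂ) ^ (a + 1 - 1) = (t : ℂ) ^ (a - 1) * t := by
      rw [add_sub_right_comm, cpow_add _ _ (ofReal_ne_zero.mpr ht.ne'), cpow_one]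
    have hexp : HasDerivAt (fun x : ℂ => cexp (-(x * t))) (cexp (-(x * t)) * -t) x :=
      (hasDerivAt_mul_const (t : ℂ)).neg.cexp
    refine (hexp.const_mul _).congr_deriv ?_
    rw [hpow, smul_eq_mul]
    ring

lemma hasMellin_cexp_neg_mul {a z : ℂ} (ha : 0 < a.re) (hz : 0 < z.re) :
    HasMellin (fun t => cexp (-(z * t))) a (z ^ (-a) * Gamma a) := by
  refine ⟨mellinConvergent_cexp_neg_mul ha hz, ?_⟩
  have hopen := isOpen_re_gt 0
  have hmellin : AnalyticOnNhd ℂ (fun z => mellin (fun t => cexp (-(z * t))) a) {z | 0 < z.re} :=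
    DifferentiableOn.analyticOnNhd (fun z hz =>
      (hasDerivAt_mellin_cexp_neg_mul ha hz).differentiableAt.differentiableWithinAt) hopen
  have hpow : AnalyticOnNhd ℂ (fun z => z ^ (-a) * Gamma a) {z | 0 < z.re} :=
    DifferentiableOn.analyticOnNhd (fun z hz =>
      ((differentiableAt_id.cpow_const (.inl hz)).mul_const _).differentiableWithinAt) hopen
  have hreal : ∀ x : ℝ, 0 < x →
      mellin (fun t => cexp (-((x : ℂ) * t))) a = (x : ℂ) ^ (-a) * Gamma a := fun x hx => by
    have harg : arg x ≠ Real.pi := by rw [arg_ofReal_of_nonneg hx.le]; exact Real.pi_pos.ne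
    simpa [mellin, inv_cpow _ _ harg, cpow_neg] using integral_cpow_mul_exp_neg_mul_Ioi ha hx
  have hfreq : ∃ᶠ z in 𝓝[≠] (1 : ℂ),
      mellin (fun t => cexp (-(z * t))) a = z ^ (-a) * Gamma a := by
    have htendsto : Tendsto ofReal (𝓝[>] 1) (𝓝[≠] (1 : ℂ)) :=
      tendsto_nhdsWithin_iff.mpr
        ⟨(continuous_ofReal.tendsto' 1 1 ofReal_one).mono_left nhdsWithin_le_nhds,
          eventually_mem_nhdsWithin.mono fun x hx => ofReal_ne_one.mpr (ne_of_gt hx)⟩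
    have hright : ∀ᶠ x : ℝ in 𝓝[>] 1,
        mellin (fun t => cexp (-((x : ℂ) * t))) a = (x : ℂ) ^ (-a) * Gamma a :=
      eventually_mem_nhdsWithin.mono fun x hx => hreal x (one_pos.trans hx)
    exact htendsto.frequently hright.frequently
  exact hmellin.eqOn_of_preconnected_of_frequently_eq hpow
    (convex_halfSpace_re_gt 0).isPreconnected (by simp) hfreq hz

lemma integral_norm_cpow_smul_cexp_neg_mul {a z : ℂ} (ha : 0 < a.re) (hz : 0 < z.re) :
    ∫ t in Ioi (0 : ℝ), ‖(t : ℂ) ^ (a - 1) • cexp (-(z * t))‖ =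
      z.re ^ (-a.re) * Real.Gamma a.re := by
  rw [setIntegral_congr_fun measurableSet_Ioi fun t ht => norm_cpow_smul_cexp_neg_mul a z ht,
    Real.integral_rpow_mul_exp_neg_mul_Ioi ha hz, one_div, Real.inv_rpow hz.le, Real.rpow_neg hz.le]

section ExponentialSums

variable {ι : Type*}

lemma summable_mul_rpow_neg_of_mellinConvergent {c p : ι → ℝ} (hc : ∀ i, 0 ≤ c i)
    (hp : ∀ i, 0 < p i) {b : ℝ} (hb : 0 < b) {G : ℝ → ℝ}
    (hG : ∀ t, 0 < t → HasSum (fun i => c i * Real.exp (-(p i * t))) (G t))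
    (hconv : MellinConvergent (fun t => (G t : ℂ)) b) :
    Summable fun i => c i * p i ^ (-b) := by
  have hΓ : 0 < Real.Gamma b := Real.Gamma_pos_of_pos hb
  have hre i : 0 < (p i : ℂ).re := hp i
  have hint i : IntegrableOn (fun t : ℝ => c i * ‖(t : ℂ) ^ ((b : ℂ) - 1) • cexp (-(p i * t))‖)
      (Ioi 0) :=
    (mellinConvergent_cexp_neg_mul (a := b) hb (hre i)).norm.const_mul _
  rw [← summable_mul_right_iff hΓ.ne']
  refine summable_of_sum_le
    (c := ∫ t in Ioi (0 : ℝ), ‖(t : ℂ) ^ ((b : ℂ) - 1) • (G t : ℂ)‖)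
    (fun i => by have := hc i; have := hp i; positivity) fun u => ?_
  calc ∑ i ∈ u, c i * p i ^ (-b) * Real.Gamma b
      = ∑ i ∈ u, ∫ t in Ioi (0 : ℝ), c i * ‖(t : ℂ) ^ ((b : ℂ) - 1) • cexp (-(p i * t))‖ := by
        refine Finset.sum_congr rfl fun i _ => ?_
        rw [integral_const_mul, integral_norm_cpow_smul_cexp_neg_mul hb (hre i), ofReal_re,
          ofReal_re, mul_assoc]
    _ = ∫ t in Ioi (0 : ℝ), ∑ i ∈ u, c i * ‖(t : ℂ) ^ ((b : ℂ) - 1) • cexp (-(p i * t))‖ :=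
        (integral_finsetSum _ fun i _ => hint i).symm
    _ ≤ ∫ t in Ioi (0 : ℝ), ‖(t : ℂ) ^ ((b : ℂ) - 1) • (G t : ℂ)‖ := by
        refine setIntegral_mono_on (integrable_finsetSum _ fun i _ => hint i) hconv.norm
          measurableSet_Ioi fun t ht => ?_
        have hle := (sum_le_hasSum u (fun i _ => mul_nonneg (hc i) (Real.exp_nonneg _))
          (hG t ht)).trans (le_abs_self _)
        simp only [norm_smul, norm_cexp_neg_mul_ofReal, ofReal_re, mul_left_comm (c _),
          ← Finset.mul_sum, norm_real, Real.norm_eq_abs]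
        gcongr

lemma hasSum_mellin_of_hasSum_cexp [Countable ι] {c z : ι → ℂ} (hz : ∀ i, 0 < (z i).re) {a : ℂ}
    (ha : 0 < a.re) {F : ℝ → ℂ}
    (hF : ∀ t : ℝ, 0 < t → HasSum (fun i => c i * cexp (-(z i * t))) (F t))
    (hsum : Summable fun i => ‖c i‖ * (z i).re ^ (-a.re)) :
    HasSum (fun i => c i * z i ^ (-a) * Gamma a) (mellin F a) := by
  have hterm i := hasMellin_const_smul (hasMellin_cexp_neg_mul ha (hz i)).1 (c i)
  have hnorm i : ∫ t in Ioi (0 : ℝ), ‖(t : ℂ) ^ (a - 1) • (c i • cexp (-(z i * t)))‖ =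
      ‖c i‖ * (z i).re ^ (-a.re) * Real.Gamma a.re := by
    simp_rw [smul_comm _ (c i), norm_smul (c i)]
    rw [integral_const_mul, integral_norm_cpow_smul_cexp_neg_mul ha (hz i), mul_assoc]
  have hmain := hasSum_integral_of_summable_integral_norm (fun i => (hterm i).1)
    (by simpa only [hnorm] using hsum.mul_right (Real.Gamma a.re))
  have hmellin : ∫ t in Ioi (0 : ℝ), ∑' i, (t : ℂ) ^ (a - 1) • (c i • cexp (-(z i * t))) =
      mellin F a :=
    setIntegral_congr_fun measurableSet_Ioi fun t ht => ((hF t ht).const_smul _).tsum_eq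
  rw [hmellin] at hmain
  refine hmain.congr_fun fun i => ?_
  rw [mul_assoc, ← (hasMellin_cexp_neg_mul ha (hz i)).2]
  exact (hterm i).2.symm

end ExponentialSums

lemma norm_cexp_neg_mul_lt_one {z : ℂ} (hz : 0 < z.re) {t : ℝ} (ht : 0 < t) :
    ‖cexp (-(z * t))‖ < 1 := by
  rw [norm_cexp_neg_mul_ofReal, Real.exp_lt_one_iff, neg_lt_zero]
  positivity

lemma one_sub_cexp_neg_mul_ne_zero {z : ℂ} (hz : 0 < z.re) {t : ℝ} (ht : 0 < t) :
    1 - cexp (-(z * t)) ≠ 0 :=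
  (isUnit_one_sub_of_norm_lt_one (norm_cexp_neg_mul_lt_one hz ht)).ne_zero

lemma tendsto_cexp_neg_mul_atTop {z : ℂ} (hz : 0 < z.re) :
    Tendsto (fun t : ℝ => cexp (-(z * t))) atTop (𝓝 0) := by
  rw [tendsto_zero_iff_norm_tendsto_zero]
  simp only [norm_cexp_neg_mul_ofReal]
  exact Real.tendsto_exp_neg_atTop_nhds_zero.comp (tendsto_id.const_mul_atTop hz)

lemma isBigO_inv_one_sub_cexp_neg_mul {z : ℂ} (hz : z ≠ 0) :
    (fun t : ℝ => (1 - cexp (-(z * t)))⁻¹) =O[𝓝[>] 0] fun t => t⁻¹ := by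
  have hderiv : HasDerivAt (fun t : ℝ => cexp (-(z * t))) (-z) 0 := by
    simpa using ((hasDerivAt_id (0 : ℝ)).ofReal_comp.const_mul z).neg.cexp
  have htheta := ((hderiv.const_sub 1).isTheta_sub (by simpa using hz)).isBigO_symm
  rw [prod_pure, isBigO_map] at htheta
  refine IsBigO.inv_rev ?_ (eventually_mem_nhdsWithin.mono fun t ht h => absurd h ht.ne')
  simpa [Function.comp_def] using htheta.mono nhdsWithin_le_nhds

/-- The function `exp (-s t) ∏ᵢ (1 - exp (-ωᵢ t))⁻¹` whose Mellin transform is, up to a Gamma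
factor, the multiple Hurwitz zeta function of order `r` with shift `s` and periods `ω`. The periods
may be complex; convergence statements ask for positive real parts. -/
noncomputable def multipleHurwitzKernel {r : ℕ} (s : ℂ) (ω : Fin r → ℂ) (t : ℝ) : ℂ :=
  cexp (-(s * t)) * ∏ i, (1 - cexp (-(ω i * t)))⁻¹

variable {r : ℕ} {s w : ℂ} {ω : Fin r → ℂ}

lemma continuousOn_multipleHurwitzKernel (hω : ∀ i, 0 < (ω i).re) :
    ContinuousOn (multipleHurwitzKernel s ω) (Ioi 0) := by
  unfold multipleHurwitzKernel
  refine ContinuousOn.mul (by fun_prop) (continuousOn_finsetProd _ fun i _ => ?_)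
  exact ContinuousOn.inv₀ (by fun_prop) fun t ht => one_sub_cexp_neg_mul_ne_zero (hω i) ht

lemma isBigO_multipleHurwitzKernel_atTop (hω : ∀ i, 0 < (ω i).re) :
    multipleHurwitzKernel s ω =O[atTop] fun t => Real.exp (-s.re * t) := by
  have hprod : Tendsto (fun t : ℝ => ∏ i, (1 - cexp (-(ω i * t)))⁻¹) atTop
      (𝓝 (∏ _i, (1 - 0)⁻¹)) :=
    tendsto_finsetProd _ fun i _ =>
      ((tendsto_cexp_neg_mul_atTop (hω i)).const_sub 1).inv₀ (by simp)
  simpa only [mul_one] using! (isBigO_cexp_neg_mul_atTop s).mul (hprod.isBigO_one ℝ)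

lemma isBigO_multipleHurwitzKernel_nhdsGT_zero (hω : ∀ i, 0 < (ω i).re) :
    multipleHurwitzKernel s ω =O[𝓝[>] 0] fun t => t ^ (-(r : ℝ)) := by
  have hprod : (fun t : ℝ => ∏ i, (1 - cexp (-(ω i * t)))⁻¹) =O[𝓝[>] 0]
      fun t => ∏ _i : Fin r, t⁻¹ :=
    .finsetProd fun i _ => isBigO_inv_one_sub_cexp_neg_mul fun h => by simpa [h] using hω i
  refine ((isBigO_cexp_neg_mul_nhdsGT_zero s).mul hprod).congr' .rfl
    (eventually_mem_nhdsWithin.mono fun t ht => ?_)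
  simp [Real.rpow_neg (le_of_lt ht)]

lemma mellinConvergent_multipleHurwitzKernel (hω : ∀ i, 0 < (ω i).re) (hs : 0 < s.re)
    (hw : r < w.re) : MellinConvergent (multipleHurwitzKernel s ω) w :=
  mellinConvergent_of_isBigO_rpow_exp hs
    ((continuousOn_multipleHurwitzKernel hω).locallyIntegrableOn measurableSet_Ioi)
    (isBigO_multipleHurwitzKernel_atTop hω) (isBigO_multipleHurwitzKernel_nhdsGT_zero hω) hw

lemma hasSum_multipleHurwitzKernel (hω : ∀ i, 0 < (ω i).re) {t : ℝ} (ht : 0 < t) :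
    HasSum (fun n : Fin r → ℕ => cexp (-((s + ∑ i, n i * ω i) * t)))
      (multipleHurwitzKernel s ω t) := by
  have hlt := fun i => norm_cexp_neg_mul_lt_one (hω i) ht
  have hprod := hasSum_prod_pi (β := fun _ => ℕ) (f := fun i k => cexp (-(ω i * t)) ^ k)
    (fun i => by simpa using summable_geometric_of_lt_one (norm_nonneg _) (hlt i))
    fun i => hasSum_geometric_of_norm_lt_one (hlt i)
  refine (hprod.mul_left (cexp (-(s * t)))).congr_fun fun n => ?_
  simp only [← Complex.exp_nat_mul, ← Complex.exp_sum, ← Complex.exp_add, add_mul, neg_add,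
    Finset.sum_mul, mul_neg, Finset.sum_neg_distrib, mul_assoc]

/-- The multiple Hurwitz (Barnes) zeta function `ζᵣ(w, s, ω)` of order `r` with shift `s` and
periods `ω`. It is given by its series, hence meaningful only where that series converges: for
`Re s > 0` and `Re ωᵢ > 0` this holds when `Re w > r`. No analytic continuation in `w` is built
in. -/
noncomputable def multipleHurwitzZeta {r : ℕ} (w s : ℂ) (ω : Fin r → ℂ) : ℂ :=
  ∑' n : Fin r → ℕ, (s + ∑ i, n i * ω i) ^ (-w)

lemma re_add_sum_natCast_mul_pos (hω : ∀ i, 0 < (ω i).re) (hs : 0 < s.re) (n : Fin r → ℕ) :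
    0 < (s + ∑ i, n i * ω i).re := by
  have hsum : 0 ≤ ∑ i, n i * (ω i).re :=
    Finset.sum_nonneg fun i _ => mul_nonneg (Nat.cast_nonneg _) (hω i).le
  simpa using add_pos_of_pos_of_nonneg hs hsum

lemma summable_re_add_sum_natCast_mul_rpow_neg (hω : ∀ i, 0 < (ω i).re) (hs : 0 < s.re) {b : ℝ}
    (hb : r < b) : Summable fun n : Fin r → ℕ => (s + ∑ i, n i * ω i).re ^ (-b) := by
  have hω' : ∀ i, 0 < ((ω i).re : ℂ).re := hω
  let G (t : ℝ) : ℝ := Real.exp (-(s.re * t)) * ∏ i, (1 - Real.exp (-((ω i).re * t)))⁻¹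
  have hkernel : multipleHurwitzKernel s.re (fun i => ((ω i).re : ℂ)) = fun t => (G t : ℂ) := by
    ext t; simp [multipleHurwitzKernel, G]
  have hG (t : ℝ) (ht : 0 < t) : HasSum (fun n : Fin r → ℕ =>
      1 * Real.exp (-((s + ∑ i, n i * ω i).re * t))) (G t) := by
    have hcast := hasSum_multipleHurwitzKernel (s := s.re) hω' ht
    rw [hkernel] at hcast
    exact hasSum_ofReal.mp (by simpa using hcast)
  simpa using summable_mul_rpow_neg_of_mellinConvergent (fun _ => zero_le_one)
    (re_add_sum_natCast_mul_pos hω hs) (r.cast_nonneg.trans_lt hb) hG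
    (hkernel ▸ mellinConvergent_multipleHurwitzKernel (s := s.re) hω' hs hb)

lemma hasSum_mellin_multipleHurwitzKernel (hω : ∀ i, 0 < (ω i).re) (hs : 0 < s.re)
    (hw : r < w.re) :
    HasSum (fun n : Fin r → ℕ => (s + ∑ i, n i * ω i) ^ (-w) * Gamma w)
      (mellin (multipleHurwitzKernel s ω) w) := by
  simpa using hasSum_mellin_of_hasSum_cexp (c := 1) (re_add_sum_natCast_mul_pos hω hs)
    (r.cast_nonneg.trans_lt hw) (fun t ht => by simpa using hasSum_multipleHurwitzKernel hω ht)
    (by simpa using summable_re_add_sum_natCast_mul_rpow_neg hω hs hw)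

lemma summable_multipleHurwitzZeta (hω : ∀ i, 0 < (ω i).re) (hs : 0 < s.re) (hw : r < w.re) :
    Summable fun n : Fin r → ℕ => (s + ∑ i, n i * ω i) ^ (-w) :=
  (summable_mul_right_iff (Gamma_ne_zero_of_re_pos (r.cast_nonneg.trans_lt hw))).mp
    (hasSum_mellin_multipleHurwitzKernel hω hs hw).summable

theorem hasMellin_multipleHurwitzKernel (hω : ∀ i, 0 < (ω i).re) (hs : 0 < s.re)
    (hw : r < w.re) :
    HasMellin (multipleHurwitzKernel s ω) w (multipleHurwitzZeta w s ω * Gamma w) :=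
  ⟨mellinConvergent_multipleHurwitzKernel hω hs hw, by
    rw [multipleHurwitzZeta, ← tsum_mul_right,
      (hasSum_mellin_multipleHurwitzKernel hω hs hw).tsum_eq]⟩

lemma multipleHurwitzKernel_pair (s N : ℂ) (t : ℝ) :
    multipleHurwitzKernel (s + 2 * N) ![N, N] t =
      cexp (-(s * t)) * ((cexp (N * t) - 1) ^ 2)⁻¹ := by
  have hfactor : cexp (N * t) - 1 = cexp (N * t) * (1 - cexp (-(N * t))) := by
    rw [mul_sub, ← Complex.exp_add]; simp
  have hexp : cexp (-((s + 2 * N) * t)) = cexp (-(s * t)) * (cexp (N * t) ^ 2)⁻¹ := by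
    rw [← Complex.exp_nat_mul, ← Complex.exp_neg, ← Complex.exp_add]
    congr 1
    push_cast
    ring
  rw [hfactor, mul_pow, mul_inv, multipleHurwitzKernel, hexp]
  simp [Fin.prod_univ_two, sq, mul_assoc]

end

theorem absolute_hurwitz_zeta_of_inv_pow_sub_one_sq_general (N w s : ℂ) (hN : 0 < N.re)
    (hw : 2 < w.re) (hs : 0 < (s + 2 * N).re) :
    IntegrableOn
      (fun t : ℝ =>
        Complex.exp (-(s * t)) * ((Complex.exp (N * t) - 1) ^ 2)⁻¹ * (t : ℂ) ^ (w - 1))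
      (Set.Ioi (0 : ℝ)) ∧
    Summable (fun p : ℕ × ℕ =>
      (s + 2 * N + (p.1 + p.2) * N) ^ (-w)) ∧
    (1 / Complex.Gamma w) *
        ∫ t in Set.Ioi (0 : ℝ),
          Complex.exp (-(s * t)) * ((Complex.exp (N * t) - 1) ^ 2)⁻¹ * (t : ℂ) ^ (w - 1)
      = ∑' p : ℕ × ℕ, (s + 2 * N + (p.1 + p.2) * N) ^ (-w) := by
  have hω : ∀ i, 0 < (![N, N] i).re := by simp [Fin.forall_fin_two, hN]
  have hΓ : Gamma w ≠ 0 := Gamma_ne_zero_of_re_pos (two_pos.trans hw)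
  have hterm (p : ℕ × ℕ) : (s + 2 * N + (p.1 + p.2) * N) ^ (-w) =
      (s + 2 * N + ∑ i, ((finTwoArrowEquiv ℕ).symm p i : ℂ) * ![N, N] i) ^ (-w) := by
    simp [Fin.sum_univ_two, add_mul]
  obtain ⟨hconv, hmellin⟩ := hasMellin_multipleHurwitzKernel hω hs (by simpa using hw)
  simp only [MellinConvergent, mellin, multipleHurwitzKernel_pair, smul_eq_mul,
    mul_comm ((_ : ℂ) ^ (w - 1))] at hconv hmellin
  refine ⟨hconv, ?_, ?_⟩
  · simp_rw [hterm]
    exact (finTwoArrowEquiv ℕ).symm.summable_iff.mpr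
      (summable_multipleHurwitzZeta hω hs (by simpa using hw))
  · simp_rw [hterm]
    rw [hmellin, (finTwoArrowEquiv ℕ).symm.tsum_eq
      (fun n => (s + 2 * N + ∑ i, (n i : ℂ) * ![N, N] i) ^ (-w)), ← multipleHurwitzZeta]
    field_simp

/-- For a positive integer `N` and `w, s : ℂ` with `Re w > 2` and
`Re s > 0`,
`(1/Γ(w)) ∫₀^∞ e^{-st} (e^{Nt} - 1)^{-2} t^{w-1} dt
  = Σ_{n₁,n₂ ≥ 0} (s + 2N + (n₁+n₂)N)^{-w}`,
where both the integral and the double series converge absolutely. -/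
theorem absolute_hurwitz_zeta_of_inv_pow_sub_one_sq (N : ℕ) (hN : 0 < N)
    (w s : ℂ) (hw : 2 < w.re) (hs : 0 < s.re) :
    IntegrableOn
      (fun t : ℝ =>
        Complex.exp (-(s * t)) * ((Complex.exp (N * t) - 1) ^ 2)⁻¹ * (t : ℂ) ^ (w - 1))
      (Set.Ioi (0 : ℝ)) ∧
    Summable (fun p : ℕ × ℕ =>
      (s + 2 * N + (p.1 + p.2) * N) ^ (-w)) ∧
    (1 / Complex.Gamma w) *
        ∫ t in Set.Ioi (0 : ℝ),
          Complex.exp (-(s * t)) * ((Complex.exp (N * t) - 1) ^ 2)⁻¹ * (t : ℂ) ^ (w - 1)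
      = ∑' p : ℕ × ℕ, (s + 2 * N + (p.1 + p.2) * N) ^ (-w) := by
  exact absolute_hurwitz_zeta_of_inv_pow_sub_one_sq_general N w s (by simpa using hN) hw
    (by simpa using add_pos_of_pos_of_nonneg hs (by positivity))
end
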